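/- arXiv:2406.04715 — 2 statements merged into one kernel-verified Lean document; each statement's English description precedes it below -/
import Mathlib

section
/- For every t ∈ ℂ, the conjugation quandle Conj(X̃_t) is connected: for all A, B ∈ X̃_t there exists an element g of the subgroup of SL(2,ℂ) generated by X̃_t such that g⁻¹ A g = B. (Equivalently, B is obtained from A by a finite sequence of point symmetries s_C(x) = C⁻¹xC, C ∈ X̃_t, and their inverses.) -/
open Matrix

abbrev SL2C := Matrix.SpecialLinearGroup (Fin 2) ℂ

/-- `X̃_t`: the set of elements of `SL(2,ℂ)` of trace `t`, other than `±I`. -/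
def XtSL (t : ℂ) : Set SL2C :=
  {A | Matrix.trace (A : Matrix (Fin 2) (Fin 2) ℂ) = t ∧
    (A : Matrix (Fin 2) (Fin 2) ℂ) ≠ 1 ∧ (A : Matrix (Fin 2) (Fin 2) ℂ) ≠ -1}

/-!
A non-scalar `A ∈ SL(2, F)` has a vector `v` such that `v` and `A v` are linearly independent. If
`F` contains square roots, `v` can be rescaled so that `(v, A v)` has determinant `1`; by
Cayley–Hamilton this matrix conjugates `A` to the companion matrix of its characteristic polynomial,
which depends only on `tr A`. So noncentral elements of equal trace are conjugate.

The subgroup generated by the noncentral elements of trace `t` contains the normal closure of any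
one of them. That normal closure is all of `SL(2, F)`, because `SL(2, F)` is perfect and `PSL(2, F)`
is simple.
-/

open scoped MatrixGroups

section PerfectGroup

variable {G : Type*} [Group G] [Group.IsPerfect G] [IsSimpleGroup (G ⧸ Subgroup.center G)]

lemma normal_eq_top_of_not_le_center {N : Subgroup G} [N.Normal] (hN : ¬N ≤ Subgroup.center G) :
    N = ⊤ := by
  let π := QuotientGroup.mk' (Subgroup.center G)
  have hπ : Function.Surjective π := QuotientGroup.mk'_surjective _
  have image_ne_bot : N.map π ≠ ⊥ := by
    rwa [Ne, Subgroup.map_eq_bot_iff, QuotientGroup.ker_mk']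
  have image_eq_top : N.map π = ⊤ :=
    (Subgroup.Normal.map ‹_› π hπ).eq_bot_or_eq_top.resolve_left image_ne_bot
  have sup_center_eq_top : N ⊔ Subgroup.center G = ⊤ := by
    rw [← QuotientGroup.ker_mk' (Subgroup.center G), ← Subgroup.comap_map_eq, image_eq_top,
      Subgroup.comap_top]
  rw [eq_top_iff, ← Group.IsPerfect.commutator_eq_top (G := G)]
  exact Subgroup.Normal.commutator_le_of_self_sup_commutative_eq_top sup_center_eq_top inferInstance

lemma normalClosure_singleton_eq_top {a : G} (ha : a ∉ Subgroup.center G) :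
    Subgroup.normalClosure {a} = ⊤ :=
  normal_eq_top_of_not_le_center fun h ↦
    ha (h (Subgroup.subset_normalClosure (Set.mem_singleton a)))

end PerfectGroup

section Krylov

variable {R : Type*} [CommRing R]

/-- The Krylov matrix of a `2 × 2` matrix `M` and a vector `v`: its columns are `v` and `M v`. It is
invertible exactly when `v` is a cyclic vector of `M`. -/
def krylov (M : Matrix (Fin 2) (Fin 2) R) (v : Fin 2 → R) : Matrix (Fin 2) (Fin 2) R :=
  (of ![v, M *ᵥ v])ᵀ

lemma mul_krylov (M : Matrix (Fin 2) (Fin 2) R) (v : Fin 2 → R) :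
    M * krylov M v = krylov M v * !![0, -M.det; 1, M.trace] := by
  ext i j
  fin_cases i <;> fin_cases j <;>
    simp [krylov, mul_apply, det_fin_two, trace_fin_two] <;> ring

lemma krylov_smul (M : Matrix (Fin 2) (Fin 2) R) (r : R) (v : Fin 2 → R) :
    krylov M (r • v) = r • krylov M v := by
  ext i j
  fin_cases i <;> fin_cases j <;> simp [krylov, mulVec_smul]

lemma exists_det_krylov_ne_zero {M : Matrix (Fin 2) (Fin 2) R}
    (hM : M ∉ Set.range (scalar (Fin 2))) : ∃ v, (krylov M v).det ≠ 0 := by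
  by_contra! h
  have lower_eq_zero : M 1 0 = 0 := by simpa [krylov, det_fin_two] using h ![1, 0]
  have upper_eq_zero : M 0 1 = 0 := by simpa [krylov, det_fin_two] using h ![0, 1]
  have diag_eq : M 1 1 = M 0 0 := by
    simpa [krylov, det_fin_two, lower_eq_zero, upper_eq_zero, sub_eq_zero] using h ![1, 1]
  refine hM ⟨M 0 0, ?_⟩
  ext i j
  fin_cases i <;> fin_cases j <;> simp [lower_eq_zero, upper_eq_zero, diag_eq]

end Krylov

section SpecialLinearGroup

variable {n R : Type*} [Fintype n] [DecidableEq n] [CommRing R] {A B : SpecialLinearGroup n R}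

lemma mem_center_iff_coe_mem_range_scalar :
    A ∈ Subgroup.center (SpecialLinearGroup n R) ↔ (A : Matrix n n R) ∈ Set.range (scalar n) := by
  rw [Matrix.SpecialLinearGroup.mem_center_iff]
  refine ⟨fun ⟨r, _, hr⟩ ↦ ⟨r, hr⟩, fun ⟨r, hr⟩ ↦ ⟨r, ?_, hr⟩⟩
  rw [← A.det_coe, ← hr, scalar_apply, det_diagonal, Finset.prod_const, Finset.card_univ]

lemma trace_eq_of_isConj (h : IsConj A B) :
    trace (A : Matrix n n R) = trace (B : Matrix n n R) := by
  obtain ⟨P, rfl⟩ := isConj_iff.1 h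
  rw [mul_assoc, Matrix.SpecialLinearGroup.coe_mul, trace_mul_comm,
    ← Matrix.SpecialLinearGroup.coe_mul, inv_mul_cancel_right]

end SpecialLinearGroup

section SL2

section CommRing

variable {R : Type*} [CommRing R]

/-- The companion matrix of `X ^ 2 - t * X + 1`, as an element of `SL(2, R)`. -/
def companionSL (t : R) : SL(2, R) := ⟨!![0, -1; 1, t], by simp⟩

/-- The noncentral elements of `SL(2, R)` of trace `t`, the analogue of `XtSL t` over any
commutative ring. -/
def noncentralOfTrace (t : R) : Set SL(2, R) :=
  {A | trace (A : Matrix (Fin 2) (Fin 2) R) = t ∧ A ∉ Subgroup.center SL(2, R)}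

lemma mem_center_iff_coe_eq_one_or_neg_one [NoZeroDivisors R] {A : SL(2, R)} :
    A ∈ Subgroup.center SL(2, R) ↔
      (A : Matrix (Fin 2) (Fin 2) R) = 1 ∨ (A : Matrix (Fin 2) (Fin 2) R) = -1 := by
  rw [Matrix.SpecialLinearGroup.mem_center_iff]
  constructor
  · rintro ⟨r, hr, hA⟩
    rcases sq_eq_one_iff.1 hr with rfl | rfl
    · exact .inl <| by rw [← hA, map_one]
    · exact .inr <| by rw [← hA, map_neg, map_one]
  · rintro (hA | hA)
    · exact ⟨1, one_pow _, by rw [hA, map_one]⟩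
    · exact ⟨-1, neg_one_sq, by rw [hA, map_neg, map_one]⟩

lemma conjugatesOf_subset_noncentralOfTrace {t : R} {A : SL(2, R)}
    (hA : A ∈ noncentralOfTrace t) : conjugatesOf A ⊆ noncentralOfTrace t := by
  intro B hAB
  refine ⟨(trace_eq_of_isConj hAB).symm.trans hA.1, fun hB ↦ hA.2 ?_⟩
  obtain ⟨P, rfl⟩ := isConj_iff.1 hAB.symm
  exact Subgroup.instNormalCenter.conj_mem B hB P

end CommRing

variable {F : Type*} [Field F]

lemma isConj_companionSL (hsq : ∀ x : F, IsSquare x) {A : SL(2, F)}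
    (hA : A ∉ Subgroup.center SL(2, F)) :
    IsConj (companionSL (trace (A : Matrix (Fin 2) (Fin 2) F))) A := by
  obtain ⟨v, hv⟩ := exists_det_krylov_ne_zero (mem_center_iff_coe_mem_range_scalar.not.1 hA)
  obtain ⟨r, hr⟩ := hsq (krylov A.1 v).det⁻¹
  let P : SL(2, F) := ⟨krylov A.1 (r • v), by
    rw [krylov_smul, det_smul, Fintype.card_fin, sq, ← hr, inv_mul_cancel₀ hv]⟩
  have mul_eq : A * P = P * companionSL (trace A.1) := by
    have cayley_hamilton := mul_krylov A.1 (r • v)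
    rw [A.det_coe] at cayley_hamilton
    exact Subtype.ext cayley_hamilton
  exact isConj_iff.2 ⟨P, by rw [← mul_eq, mul_inv_cancel_right]⟩

lemma isConj_of_mem_noncentralOfTrace (hsq : ∀ x : F, IsSquare x) {t : F} {A B : SL(2, F)}
    (hA : A ∈ noncentralOfTrace t) (hB : B ∈ noncentralOfTrace t) : IsConj A B := by
  have companion_conj_A := isConj_companionSL hsq hA.2
  have companion_conj_B := isConj_companionSL hsq hB.2
  rw [hA.1] at companion_conj_A
  rw [hB.1] at companion_conj_B
  exact companion_conj_A.symm.trans companion_conj_B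

lemma closure_noncentralOfTrace_eq_top (hF : ∃ a : F, a ≠ 0 ∧ a ^ 2 ≠ 1) {t : F}
    (ht : (noncentralOfTrace t).Nonempty) : Subgroup.closure (noncentralOfTrace t) = ⊤ := by
  obtain ⟨A, hA⟩ := ht
  obtain ⟨a, ha, ha_sq⟩ := hF
  have : Group.IsPerfect SL(2, F) := ⟨SL2.commutator_eq_top ha ha_sq⟩
  have : IsSimpleGroup PSL(2, F) := ProjectiveSpecialLinearGroup.rank_two_simple' ⟨a, ha, ha_sq⟩
  rw [eq_top_iff, ← normalClosure_singleton_eq_top hA.2, Subgroup.normalClosure,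
    Group.conjugatesOfSet, Set.biUnion_singleton]
  exact Subgroup.closure_mono (conjugatesOf_subset_noncentralOfTrace hA)

end SL2

lemma XtSL_eq_noncentralOfTrace (t : ℂ) : XtSL t = noncentralOfTrace t := by
  ext A
  simp only [XtSL, noncentralOfTrace, mem_center_iff_coe_eq_one_or_neg_one, not_or, ne_eq]

theorem Conj_Xt_connected_general {F : Type*} [Field F] (hsq : ∀ x : F, IsSquare x)
    (hF : ∃ a : F, a ≠ 0 ∧ a ^ 2 ≠ 1) (t : F) (A B : SL(2, F)) (hA : A ∈ noncentralOfTrace t)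
    (hB : B ∈ noncentralOfTrace t) :
    ∃ g ∈ Subgroup.closure (noncentralOfTrace t), g⁻¹ * A * g = B := by
  obtain ⟨g, hg⟩ := isConj_iff.1 (isConj_of_mem_noncentralOfTrace hsq hA hB)
  refine ⟨g⁻¹, ?_, by rwa [inv_inv]⟩
  rw [closure_noncentralOfTrace_eq_top hF ⟨A, hA⟩]
  exact Subgroup.mem_top _

/-- for every `t ∈ ℂ`, the conjugation quandle `Conj(X̃_t)` is connected:
any two elements `A, B ∈ X̃_t` are conjugate by an element of the subgroup generated
by `X̃_t` (i.e. `B` is obtained from `A` by point symmetries and their inverses). -/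
theorem Conj_Xt_connected (t : ℂ) (A B : SL2C) (hA : A ∈ XtSL t) (hB : B ∈ XtSL t) :
    ∃ g ∈ Subgroup.closure (XtSL t), g⁻¹ * A * g = B := by
  rw [XtSL_eq_noncentralOfTrace] at *
  exact Conj_Xt_connected_general IsAlgClosed.exists_eq_mul_self ⟨2, by norm_num⟩ t A B hA hB
end

section
/- Let Γ be a Kleinian group and γ a nontrivial element of Γ. Let τ ∈ 𝒯 be the class of the trace of a lift of γ (so γ ∈ X_τ), and let f ∈ PSL(2,ℂ) satisfy fγf⁻¹ = f_τ (such f exists). Let σ_τ be the automorphism x ↦ f_τ⁻¹ x f_τ of PSL(2,ℂ). Then the map ψ : Q(Γ,γ) → Q(PSL(2,ℂ), H_τ, σ_τ) sending the coset C_Γ(γ)·g to the coset H_τ·(fgf⁻¹) is a well-defined injective quandle homomorphism. -/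
/-!
The point is that `H_τ` is exactly the centralizer of `f_τ` in `PSL(2,ℂ)`. Two elements
`π(C)`, `π(B)` commute iff `CB = ±BC`; solving this for the normal forms `B` gives `H_[2]`,
`H_τ` and `H_[0]` respectively. The minus sign forces `tr B = 0`, so it contributes only for
`τ = [0]`, where it yields the antidiagonal matrices.

An injective group homomorphism `φ` pulls the centralizer of `φ(γ)` back to the centralizer of
`γ`, so it induces an injective map of right cosets, and it intertwines the conjugations by `γ`
and `φ(γ)`. The map `ψ` arises in this way from `φ(g) = fgf⁻¹`.
-/

open Matrix

/-- `PSL(2,ℂ) = SL(2,ℂ)/{±I}` (the center of `SL(2,ℂ)` is `{±I}`). -/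
abbrev PSL2C := Matrix.ProjectiveSpecialLinearGroup (Fin 2) ℂ

/-- The subspace topology on `SL(2,ℂ)` from the `2×2` complex matrices;
`PSL(2,ℂ)` then carries the quotient topology. -/
noncomputable instance : TopologicalSpace SL2C :=
  TopologicalSpace.induced (fun A => (A : Matrix (Fin 2) (Fin 2) ℂ)) inferInstance

/-- The projection `π : SL(2,ℂ) → PSL(2,ℂ)`. -/
def prSL : SL2C →* PSL2C := QuotientGroup.mk' (Subgroup.center SL2C)

/-- `X_τ` for `τ = [t]`: the nontrivial elements of `PSL(2,ℂ)` admitting a lift of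
trace `t` or `−t`. -/
def XtauP (t : ℂ) : Set PSL2C :=
  {f | f ≠ 1 ∧ ∃ A : SL2C, prSL A = f ∧
    (Matrix.trace (A : Matrix (Fin 2) (Fin 2) ℂ) = t ∨
     Matrix.trace (A : Matrix (Fin 2) (Fin 2) ℂ) = -t)}

/-- `H_[2]`: the image in `PSL(2,ℂ)` of the upper unitriangular matrices. -/
def HparP : Set PSL2C :=
  {f | ∃ B : SL2C, prSL B = f ∧ ∃ v : ℂ, (B : Matrix (Fin 2) (Fin 2) ℂ) = !![1, v; 0, 1]}

/-- `H_τ` for `τ ∉ {[0],[2]}`: the image in `PSL(2,ℂ)` of the diagonal matrices. -/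
def HdiagP : Set PSL2C :=
  {f | ∃ B : SL2C, prSL B = f ∧
    ∃ μ : ℂ, μ ≠ 0 ∧ (B : Matrix (Fin 2) (Fin 2) ℂ) = !![μ, 0; 0, μ⁻¹]}

/-- `H_[0]`: the image in `PSL(2,ℂ)` of the diagonal and antidiagonal matrices. -/
def HzeroP : Set PSL2C :=
  HdiagP ∪ {f | ∃ B : SL2C, prSL B = f ∧
    ∃ μ : ℂ, μ ≠ 0 ∧ (B : Matrix (Fin 2) (Fin 2) ℂ) = !![0, μ; -μ⁻¹, 0]}

section TripletQuandle

variable {G G' : Type*} [Group G] [Group G']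

/-- The set `H\G` of right cosets, on which the triplet quandles of `G` and `H` live. -/
abbrev RightCosets (H : Subgroup G) : Type _ :=
  Quotient (QuotientGroup.rightRel H)

/-- The operation `Hx ◁ Hy = H·σ(xy⁻¹)y` of the triplet quandle `Q(G, H, σ)`; it does not depend on
the representatives because `σ` fixes `H` pointwise. -/
def tripletOp (σ : G ≃* G) {H : Subgroup G} (hσ : ∀ h ∈ H, σ h = h) :
    RightCosets H → RightCosets H → RightCosets H :=
  Quotient.map₂ (fun x y => σ (x * y⁻¹) * y) fun x x' hx y y' hy => by
    have hxH : x' * x⁻¹ ∈ H := QuotientGroup.rightRel_apply.mp hx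
    have hyH : y' * y⁻¹ ∈ H := QuotientGroup.rightRel_apply.mp hy
    have hσ_quot : σ (x' * y'⁻¹) = x' * x⁻¹ * σ (x * y⁻¹) * (y' * y⁻¹)⁻¹ := by
      calc σ (x' * y'⁻¹) = σ (x' * x⁻¹ * (x * y⁻¹) * (y' * y⁻¹)⁻¹) := by congr 1; group
        _ = x' * x⁻¹ * σ (x * y⁻¹) * (y' * y⁻¹)⁻¹ := by
          rw [map_mul, map_mul, map_inv, hσ _ hxH, hσ _ hyH]
    have hop_quot : σ (x' * y'⁻¹) * y' * (σ (x * y⁻¹) * y)⁻¹ = x' * x⁻¹ := by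
      rw [hσ_quot]
      group
    exact QuotientGroup.rightRel_apply.mpr (hop_quot ▸ hxH)

/-- The map `H\G → H'\G'`, `Hg ↦ H'·φ(g)`, induced by a homomorphism `φ` with `φ(H) ⊆ H'`. -/
def RightCosets.map (φ : G →* G') {H : Subgroup G} {H' : Subgroup G'} (hφ : H ≤ H'.comap φ) :
    RightCosets H → RightCosets H' :=
  Quotient.map φ fun x y hxy => by
    have hmem : φ (y * x⁻¹) ∈ H' := hφ (QuotientGroup.rightRel_apply.mp hxy)
    exact QuotientGroup.rightRel_apply.mpr (by rwa [map_mul, map_inv] at hmem)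

theorem RightCosets.map_injective {φ : G →* G'} {H : Subgroup G} {H' : Subgroup G'}
    (hφ : H = H'.comap φ) : Function.Injective (RightCosets.map φ hφ.le) := by
  rintro ⟨x⟩ ⟨y⟩ hxy
  have hmem : φ y * (φ x)⁻¹ ∈ H' := QuotientGroup.rightRel_apply.mp (Quotient.exact hxy)
  refine Quotient.sound (QuotientGroup.rightRel_apply.mpr ?_)
  rwa [hφ, Subgroup.mem_comap, map_mul, map_inv]

theorem RightCosets.map_tripletOp {φ : G →* G'} {H : Subgroup G} {H' : Subgroup G'}
    (hφ : H ≤ H'.comap φ) {σ : G ≃* G} {σ' : G' ≃* G'} (hσ : ∀ h ∈ H, σ h = h)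
    (hσ' : ∀ h ∈ H', σ' h = h) (hcomm : ∀ x, φ (σ x) = σ' (φ x)) (a b : RightCosets H) :
    map φ hφ (tripletOp σ hσ a b) = tripletOp σ' hσ' (map φ hφ a) (map φ hφ b) := by
  rcases a with ⟨x⟩
  rcases b with ⟨y⟩
  refine congrArg (Quotient.mk _) ?_
  simp only [map_mul, map_inv, hcomm]

theorem conj_symm_apply_of_mem_centralizer {g h : G} (hh : h ∈ Subgroup.centralizer {g}) :
    (MulAut.conj g).symm h = h := by
  rw [MulAut.conj_symm_apply, mul_assoc, Subgroup.mem_centralizer_singleton_iff.mp hh,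
    inv_mul_cancel_left]

theorem centralizer_singleton_eq_comap {φ : G →* G'} (hφ : Function.Injective φ) (g : G) :
    Subgroup.centralizer {g} = (Subgroup.centralizer {φ g}).comap φ := by
  ext x
  simp only [Subgroup.mem_comap, Subgroup.mem_centralizer_singleton_iff, ← map_mul, hφ.eq_iff]

end TripletQuandle

section MatrixCommutation

variable {R : Type*} [CommRing R]

theorem mul_unipotent_eq_iff (C : Matrix (Fin 2) (Fin 2) R) :
    C * !![1, 1; 0, 1] = !![1, 1; 0, 1] * C ↔ C 1 0 = 0 ∧ C 0 0 = C 1 1 := by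
  rw [C.eta_fin_two]
  simp only [Matrix.mul_fin_two, ← Matrix.ext_iff, Fin.forall_fin_two, Matrix.of_apply,
    Matrix.cons_val_zero, Matrix.cons_val_one]
  grind

theorem eq_zero_of_mul_unipotent_eq_neg [NoZeroDivisors R] [NeZero (2 : R)]
    {C : Matrix (Fin 2) (Fin 2) R} (hC : C * !![1, 1; 0, 1] = -(!![1, 1; 0, 1] * C)) : C = 0 := by
  have eq_zero_of_two_mul {x : R} (hx : 2 * x = 0) : x = 0 :=
    (mul_eq_zero.mp hx).resolve_left two_ne_zero
  rw [C.eta_fin_two] at hC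
  simp only [Matrix.mul_fin_two, ← Matrix.ext_iff, Fin.forall_fin_two, Matrix.neg_apply,
    Matrix.of_apply, Matrix.cons_val_zero, Matrix.cons_val_one, Matrix.zero_apply] at hC ⊢
  obtain ⟨⟨e00, e01⟩, e10, e11⟩ := hC
  have h10 : C 1 0 = 0 := eq_zero_of_two_mul (by linear_combination e10)
  have h00 : C 0 0 = 0 := eq_zero_of_two_mul (by linear_combination e00 - h10)
  have h11 : C 1 1 = 0 := eq_zero_of_two_mul (by linear_combination e11 - h10)
  have h01 : C 0 1 = 0 := eq_zero_of_two_mul (by linear_combination e01 - h00 - h11)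
  exact ⟨⟨h00, h01⟩, h10, h11⟩

theorem mul_diag_eq_iff [NoZeroDivisors R] {l m : R} (hlm : l ≠ m)
    (C : Matrix (Fin 2) (Fin 2) R) :
    C * !![l, 0; 0, m] = !![l, 0; 0, m] * C ↔ C 0 1 = 0 ∧ C 1 0 = 0 := by
  have mul_sub_eq_zero (x : R) : x * (l - m) = 0 ↔ x = 0 :=
    mul_eq_zero_iff_right (sub_ne_zero.mpr hlm)
  rw [← mul_sub_eq_zero (C 0 1), ← mul_sub_eq_zero (C 1 0), C.eta_fin_two]
  simp only [Matrix.mul_fin_two, ← Matrix.ext_iff, Fin.forall_fin_two, Matrix.of_apply,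
    Matrix.cons_val_zero, Matrix.cons_val_one]
  grind

theorem mul_diag_eq_neg_iff [NoZeroDivisors R] [NeZero (2 : R)] {l m : R} (hl : l ≠ 0)
    (hm : m ≠ 0) (C : Matrix (Fin 2) (Fin 2) R) :
    C * !![l, 0; 0, m] = -(!![l, 0; 0, m] * C) ↔
      (C 0 0 = 0 ∧ C 1 1 = 0) ∧ (l + m = 0 ∨ C 0 1 = 0 ∧ C 1 0 = 0) := by
  have mul_two_mul_eq_zero {r : R} (hr : r ≠ 0) (x : R) : x * (2 * r) = 0 ↔ x = 0 :=
    mul_eq_zero_iff_right (mul_ne_zero two_ne_zero hr)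
  have offdiag : l + m = 0 ∨ C 0 1 = 0 ∧ C 1 0 = 0 ↔
      (l + m) * C 0 1 = 0 ∧ (l + m) * C 1 0 = 0 := by
    rw [mul_eq_zero, mul_eq_zero, or_and_left]
  rw [offdiag, ← mul_two_mul_eq_zero hl (C 0 0), ← mul_two_mul_eq_zero hm (C 1 1),
    C.eta_fin_two]
  simp only [Matrix.mul_fin_two, ← Matrix.ext_iff, Fin.forall_fin_two, Matrix.neg_apply,
    Matrix.of_apply, Matrix.cons_val_zero, Matrix.cons_val_one]
  grind

end MatrixCommutation

theorem specialLinearGroup_mul_sub_mul_eq_one {R : Type*} [CommRing R]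
    (C : Matrix.SpecialLinearGroup (Fin 2) R) : C 0 0 * C 1 1 - C 0 1 * C 1 0 = 1 := by
  rw [← Matrix.det_fin_two, C.det_coe]

theorem prSL_surjective : Function.Surjective prSL :=
  QuotientGroup.mk'_surjective _

theorem prSL_neg (A : SL2C) : prSL (-A) = prSL A := by
  refine QuotientGroup.eq.mpr (Matrix.SpecialLinearGroup.mem_center_iff.mpr ⟨-1, by simp, ?_⟩)
  rw [map_neg, map_one]
  simp

theorem prSL_eq_prSL_iff {A B : SL2C} : prSL A = prSL B ↔ A = B ∨ A = -B := by
  refine ⟨fun h => ?_, ?_⟩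
  · obtain ⟨r, hr, hscalar⟩ :=
      Matrix.SpecialLinearGroup.mem_center_iff.mp (QuotientGroup.eq.mp h.symm)
    have hA : (A : Matrix (Fin 2) (Fin 2) ℂ) = B * Matrix.scalar (Fin 2) r := by
      rw [hscalar, ← Matrix.SpecialLinearGroup.coe_mul, mul_inv_cancel_left]
    rcases sq_eq_one_iff.mp (by simpa using hr : r ^ 2 = 1) with rfl | rfl
    · exact Or.inl (Subtype.ext (by simpa using hA))
    · exact Or.inr (Subtype.ext (by simpa [map_neg] using hA))
  · rintro (rfl | rfl)
    · rfl
    · exact prSL_neg B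

theorem prSL_mem_centralizer_prSL_iff {B C : SL2C} :
    prSL C ∈ Subgroup.centralizer {prSL B} ↔
      (C : Matrix (Fin 2) (Fin 2) ℂ) * B = B * C ∨
        (C : Matrix (Fin 2) (Fin 2) ℂ) * B = -((B : Matrix (Fin 2) (Fin 2) ℂ) * C) := by
  rw [Subgroup.mem_centralizer_singleton_iff, ← map_mul, ← map_mul, prSL_eq_prSL_iff]
  exact or_congr Subtype.ext_iff Subtype.ext_iff

theorem prSL_mem_HparP_iff {C : SL2C} : prSL C ∈ HparP ↔ C 1 0 = 0 ∧ C 0 0 = C 1 1 := by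
  constructor
  · rintro ⟨B, hBC, v, hB⟩
    rcases prSL_eq_prSL_iff.mp hBC.symm with rfl | rfl <;> simp [hB]
  · rintro ⟨hc, had⟩
    have hsq : C 1 1 ^ 2 = 1 := by
      linear_combination specialLinearGroup_mul_sub_mul_eq_one C - C 1 1 * had + C 0 1 * hc
    rcases sq_eq_one_iff.mp hsq with hd | hd
    · exact ⟨C, rfl, C 0 1, (Matrix.eta_fin_two _).trans (by rw [hc, had, hd])⟩
    · exact ⟨-C, prSL_neg C, -C 0 1, (Matrix.eta_fin_two _).trans (by simp [hc, had, hd])⟩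

theorem prSL_mem_HdiagP_iff {C : SL2C} : prSL C ∈ HdiagP ↔ C 0 1 = 0 ∧ C 1 0 = 0 := by
  constructor
  · rintro ⟨B, hBC, μ, -, hB⟩
    rcases prSL_eq_prSL_iff.mp hBC.symm with rfl | rfl <;> simp [hB]
  · rintro ⟨hb, hc⟩
    have hdet : C 0 0 * C 1 1 = 1 := by
      simpa [hb] using specialLinearGroup_mul_sub_mul_eq_one C
    refine ⟨C, rfl, C 0 0, left_ne_zero_of_mul_eq_one hdet, (Matrix.eta_fin_two _).trans ?_⟩
    rw [hb, hc, eq_inv_of_mul_eq_one_right hdet]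

theorem prSL_mem_HzeroP_iff {C : SL2C} :
    prSL C ∈ HzeroP ↔ C 0 1 = 0 ∧ C 1 0 = 0 ∨ C 0 0 = 0 ∧ C 1 1 = 0 := by
  refine or_congr prSL_mem_HdiagP_iff ⟨?_, ?_⟩
  · rintro ⟨B, hBC, μ, -, hB⟩
    rcases prSL_eq_prSL_iff.mp hBC.symm with rfl | rfl <;> simp [hB]
  · rintro ⟨ha, hd⟩
    have hdet : C 0 1 * -C 1 0 = 1 := by
      simpa [ha] using specialLinearGroup_mul_sub_mul_eq_one C
    refine ⟨C, rfl, C 0 1, left_ne_zero_of_mul_eq_one hdet, (Matrix.eta_fin_two _).trans ?_⟩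
    rw [ha, hd, ← eq_inv_of_mul_eq_one_right hdet, neg_neg]

theorem HparP_eq_centralizer {B : SL2C}
    (hB : (B : Matrix (Fin 2) (Fin 2) ℂ) = !![1, 1; 0, 1]) :
    HparP = Subgroup.centralizer {prSL B} := by
  ext x
  obtain ⟨C, rfl⟩ := prSL_surjective x
  have hC : (C : Matrix (Fin 2) (Fin 2) ℂ) ≠ 0 := fun h => by simpa [h] using C.det_coe
  rw [SetLike.mem_coe, prSL_mem_HparP_iff, prSL_mem_centralizer_prSL_iff, hB,
    mul_unipotent_eq_iff, or_iff_left fun h => hC (eq_zero_of_mul_unipotent_eq_neg h)]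

theorem prSL_mem_centralizer_diag_iff {B C : SL2C} {lam : ℂ} (hlam : lam ≠ lam⁻¹)
    (hB : (B : Matrix (Fin 2) (Fin 2) ℂ) = !![lam, 0; 0, lam⁻¹]) :
    prSL C ∈ Subgroup.centralizer {prSL B} ↔
      C 0 1 = 0 ∧ C 1 0 = 0 ∨ (C 0 0 = 0 ∧ C 1 1 = 0) ∧ lam + lam⁻¹ = 0 := by
  have hlam0 : lam ≠ 0 := by
    rintro rfl
    simp at hlam
  rw [prSL_mem_centralizer_prSL_iff, hB, mul_diag_eq_iff hlam,
    mul_diag_eq_neg_iff hlam0 (inv_ne_zero hlam0)]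
  tauto

theorem HdiagP_eq_centralizer {B : SL2C} {lam : ℂ} (hlam : lam ≠ lam⁻¹)
    (htrace : lam + lam⁻¹ ≠ 0) (hB : (B : Matrix (Fin 2) (Fin 2) ℂ) = !![lam, 0; 0, lam⁻¹]) :
    HdiagP = Subgroup.centralizer {prSL B} := by
  ext x
  obtain ⟨C, rfl⟩ := prSL_surjective x
  rw [SetLike.mem_coe, prSL_mem_HdiagP_iff, prSL_mem_centralizer_diag_iff hlam hB,
    or_iff_left fun h => htrace h.2]

theorem HzeroP_eq_centralizer {B : SL2C} {lam : ℂ} (hlam : lam ≠ lam⁻¹)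
    (htrace : lam + lam⁻¹ = 0) (hB : (B : Matrix (Fin 2) (Fin 2) ℂ) = !![lam, 0; 0, lam⁻¹]) :
    HzeroP = Subgroup.centralizer {prSL B} := by
  ext x
  obtain ⟨C, rfl⟩ := prSL_surjective x
  rw [SetLike.mem_coe, prSL_mem_HzeroP_iff, prSL_mem_centralizer_diag_iff hlam hB,
    and_iff_left htrace]

/-- `ftau` and `H` are the normal form `f_τ` and the subgroup `H_τ` for `τ = [t]`, where `f_τ` may
be formed with either root of `λ + λ⁻¹ = t`. -/
def IsNormalForm (t : ℂ) (ftau : PSL2C) (H : Subgroup PSL2C) : Prop :=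
  ((t = 2 ∨ t = -2) →
    (∃ B : SL2C, prSL B = ftau ∧ (B : Matrix (Fin 2) (Fin 2) ℂ) = !![1, 1; 0, 1]) ∧
    (H : Set PSL2C) = HparP) ∧
  (t ≠ 2 → t ≠ -2 →
    (∃ lam : ℂ, lam ≠ 0 ∧ lam + lam⁻¹ = t ∧
      ∃ B : SL2C, prSL B = ftau ∧
        (B : Matrix (Fin 2) (Fin 2) ℂ) = !![lam, 0; 0, lam⁻¹]) ∧
    (t ≠ 0 → (H : Set PSL2C) = HdiagP) ∧ (t = 0 → (H : Set PSL2C) = HzeroP))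

theorem IsNormalForm.eq_centralizer {t : ℂ} {ftau : PSL2C} {H : Subgroup PSL2C}
    (h : IsNormalForm t ftau H) : H = Subgroup.centralizer {ftau} := by
  apply SetLike.coe_injective
  by_cases ht : t = 2 ∨ t = -2
  · obtain ⟨⟨B, rfl, hB⟩, hH⟩ := h.1 ht
    exact hH.trans (HparP_eq_centralizer hB)
  · push Not at ht
    obtain ⟨⟨lam, hlam0, rfl, B, rfl, hB⟩, hdiag, hzero⟩ := h.2 ht.1 ht.2
    have hlam : lam ≠ lam⁻¹ := by
      rw [Ne, self_eq_inv₀]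
      rintro (rfl | rfl | rfl)
      · exact ht.2 (by norm_num)
      · exact hlam0 rfl
      · exact ht.1 (by norm_num)
    by_cases htrace : lam + lam⁻¹ = 0
    · exact (hzero htrace).trans (HzeroP_eq_centralizer hlam htrace hB)
    · exact (hdiag htrace).trans (HdiagP_eq_centralizer hlam htrace hB)

theorem injective_hom_to_triplet_quandle_general
    (Γ : Subgroup PSL2C) (γ : Γ) (t : ℂ) (ftau : PSL2C) (H : Subgroup PSL2C)
    (hnormal : IsNormalForm t ftau H) (f : PSL2C) (hconj : f * γ * f⁻¹ = ftau) :
    ∃ ψ : RightCosets (Subgroup.centralizer {γ}) → RightCosets H,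
      (∀ g : Γ, ψ (Quotient.mk _ g) = Quotient.mk _ (f * g * f⁻¹)) ∧
      Function.Injective ψ ∧
      (∀ x y : Γ,
        ψ (Quotient.mk _ (γ⁻¹ * (x * y⁻¹) * γ * y)) =
          Quotient.mk _
            (ftau⁻¹ * ((f * x * f⁻¹) * (f * y * f⁻¹)⁻¹) * ftau * (f * y * f⁻¹))) := by
  obtain rfl := hnormal.eq_centralizer
  subst hconj
  let φ : Γ →* PSL2C := (MulAut.conj f).toMonoidHom.comp Γ.subtype
  have hφ : Function.Injective φ := (MulAut.conj f).injective.comp Γ.subtype_injective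
  have hcomap := centralizer_singleton_eq_comap hφ γ
  have hcomm : ∀ x, φ ((MulAut.conj γ).symm x) = (MulAut.conj (φ γ)).symm (φ x) := fun x => by
    simp only [MulAut.conj_symm_apply, map_mul, map_inv]
  exact ⟨RightCosets.map φ hcomap.le, fun _ => rfl, RightCosets.map_injective hcomap,
    fun x y => RightCosets.map_tripletOp hcomap.le (fun _ => conj_symm_apply_of_mem_centralizer)
      (fun _ => conj_symm_apply_of_mem_centralizer) hcomm (Quotient.mk _ x) (Quotient.mk _ y)⟩

/-- for a Kleinian group `Γ`, a nontrivial `γ ∈ Γ` with lift `A` of trace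
`t` (so `γ ∈ X_τ`, `τ = [t]`), and `f ∈ PSL(2,ℂ)` with `fγf⁻¹ = f_τ`, the map
`ψ : Q(Γ,γ) → Q(PSL(2,ℂ), H_τ, σ_τ)`, `C_Γ(γ)·g ↦ H_τ·(fgf⁻¹)`, is a well-defined
injective quandle homomorphism. -/
theorem injective_hom_to_triplet_quandle
    (Γ : Subgroup PSL2C) (hΓ : DiscreteTopology Γ) (γ : Γ) (hγ : γ ≠ 1)
    (t : ℂ) (A : SL2C) (hA : prSL A = (γ : PSL2C))
    (htr : Matrix.trace (A : Matrix (Fin 2) (Fin 2) ℂ) = t)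
    (ftau : PSL2C) (H : Subgroup PSL2C)
    (hcase2 : (t = 2 ∨ t = -2) →
      (∃ B : SL2C, prSL B = ftau ∧ (B : Matrix (Fin 2) (Fin 2) ℂ) = !![1, 1; 0, 1]) ∧
      (H : Set PSL2C) = HparP)
    (hcaseOther : t ≠ 2 → t ≠ -2 →
      (∃ lam : ℂ, lam ≠ 0 ∧ lam + lam⁻¹ = t ∧
        ∃ B : SL2C, prSL B = ftau ∧
          (B : Matrix (Fin 2) (Fin 2) ℂ) = !![lam, 0; 0, lam⁻¹]) ∧
      (t ≠ 0 → (H : Set PSL2C) = HdiagP) ∧ (t = 0 → (H : Set PSL2C) = HzeroP))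
    (f : PSL2C) (hconj : f * γ * f⁻¹ = ftau) :
    ∃ ψ : Quotient (QuotientGroup.rightRel (Subgroup.centralizer {γ})) →
          Quotient (QuotientGroup.rightRel H),
      (∀ g : Γ, ψ (Quotient.mk (QuotientGroup.rightRel (Subgroup.centralizer {γ})) g)
        = Quotient.mk (QuotientGroup.rightRel H) (f * g * f⁻¹)) ∧
      Function.Injective ψ ∧
      (∀ x y : Γ,
        ψ (Quotient.mk (QuotientGroup.rightRel (Subgroup.centralizer {γ}))
            (γ⁻¹ * (x * y⁻¹) * γ * y))
          = Quotient.mk (QuotientGroup.rightRel H)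
            (ftau⁻¹ * ((f * x * f⁻¹) * (f * y * f⁻¹)⁻¹) * ftau * (f * y * f⁻¹))) := by
  exact injective_hom_to_triplet_quandle_general Γ γ t ftau H ⟨hcase2, hcaseOther⟩ f hconj
end
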